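/- Suppose that for every n ≥ 2 the n-tuple (x₁ⁿ,…,xₙⁿ) ∈ (ℝ²)ⁿ minimizes w_n over (ℝ²)ⁿ. Then lim_{n→∞} (1/n)∑_{i=1}^n log(1+|xᵢⁿ|²) = ∫_{ℝ²} log(1+|x|²) dμ_V(x) = 1. -/

import Mathlib

open Real Classical Filter MeasureTheory

/-- The Hamiltonian `w_n` (for `V(x) = log(1+|x|²)`), with value `+∞` at tuples with
coinciding points. -/
noncomputable def wHamE (n : ℕ) (x : Fin n → EuclideanSpace ℝ (Fin 2)) : EReal :=
  if Function.Injective x then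
    ((-∑ i : Fin n, ∑ j : Fin n, (if i ≠ j then Real.log (dist (x i) (x j)) else 0)
      + (n : ℝ) * ∑ i : Fin n, Real.log (1 + ‖x i‖^2) : ℝ) : EReal)
  else ⊤

/-- The equilibrium measure `μ_V`, with density `1/(π(1+|x|²)²)` w.r.t. Lebesgue measure. -/
noncomputable def muV : Measure (EuclideanSpace ℝ (Fin 2)) :=
  volume.withDensity fun x => ENNReal.ofReal (1 / (π * (1 + ‖x‖^2)^2))

/-- Product form of the Jensen inequality on a circle, by the maximum modulus principle. -/
lemma exists_circle {ι : Type*} (J : Finset ι) (x : ι → ℂ) (R : ℝ) (hR : 0 < R) :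
    ∃ y : ℂ, ‖y‖ = R ∧ ∏ j ∈ J, max R ‖x j‖ ≤ ∏ j ∈ J, ‖y - x j‖ := by
  let f : ι → ℂ → ℂ := fun j y =>
    if R < ‖x j‖ then y - x j else (R : ℂ) - (starRingEnd ℂ (x j)) * y / R
  have hd : Differentiable ℂ (fun y => ∏ j ∈ J, f j y) := by
    apply Differentiable.fun_finsetProd
    intro j _
    simp only [f]
    split_ifs <;> fun_prop
  obtain ⟨y, hy, hmax⟩ := Complex.exists_mem_frontier_isMaxOn_norm
    (Metric.isBounded_ball (x := (0:ℂ)) (r := R)) ⟨0, by simpa using hR⟩ hd.diffContOnCl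
  rw [frontier_ball _ hR.ne'] at hy
  have hyR : ‖y‖ = R := by simpa using hy
  refine ⟨y, hyR, ?_⟩
  have h0 := hmax (subset_closure (by simpa using hR : (0:ℂ) ∈ Metric.ball (0:ℂ) R))
  simp only [Set.mem_ofPred_eq, Function.comp, norm_prod] at h0
  have e1 : ∀ j, ‖f j 0‖ = max R ‖x j‖ := by
    intro j
    simp only [f]
    split_ifs with h
    · simp [max_eq_right h.le]
    · simp [max_eq_left (not_lt.mp h), abs_of_pos hR]
  have e2 : ∀ j, ‖f j y‖ = ‖y - x j‖ := by
    intro j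
    simp only [f]
    split_ifs with h
    · rfl
    · have hRc : (R:ℂ) ≠ 0 := by exact_mod_cast hR.ne'
      have hyy : y * starRingEnd ℂ y = (R:ℂ) * R := by
        rw [Complex.mul_conj, Complex.normSq_eq_norm_sq, hyR]; push_cast; ring
      have : (R : ℂ) - (starRingEnd ℂ (x j)) * y / R
          = (y / R) * starRingEnd ℂ (y - x j) := by
        rw [map_sub]
        field_simp
        rw [mul_sub, hyy]; ring
      rw [this, norm_mul, RCLike.norm_conj, norm_div, hyR]
      simp [abs_of_pos hR, hR.ne']
  simpa [e1, e2] using h0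

open scoped ComplexOrder in
lemma hadamard_unit {N : ℕ} (A : Matrix (Fin N) (Fin N) ℂ)
    (h : ∀ i, ∑ k, ‖A i k‖ ^ 2 = 1) : ‖A.det‖ ≤ 1 := by
  have hps : (A * A.conjTranspose).PosSemidef := Matrix.posSemidef_self_mul_conjTranspose A
  have hH := hps.isHermitian
  have hdet := hH.det_eq_prod_eigenvalues
  have htr := hH.trace_eq_sum_eigenvalues
  have htr' : ∑ i, hH.eigenvalues i = N := by
    have : (A * A.conjTranspose).trace = (N : ℂ) := by
      simp only [Matrix.trace, Matrix.diag, Matrix.mul_apply, Matrix.conjTranspose_apply]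
      have : ∀ i, ∑ k, A i k * star (A i k) = 1 := by
        intro i
        have := h i
        calc ∑ k, A i k * star (A i k) = ((∑ k, ‖A i k‖ ^ 2 : ℝ) : ℂ) := by
              push_cast
              exact Finset.sum_congr rfl fun k _ => by
                rw [Complex.star_def, Complex.mul_conj, Complex.normSq_eq_norm_sq]; push_cast; rfl
          _ = 1 := by rw [this]; simp
      simp_rw [this]
      simp
    rw [this] at htr
    exact Complex.ofReal_injective (by push_cast; exact htr.symm)
  have hprod : ∏ i, hH.eigenvalues i = ‖A.det‖ ^ 2 := by
    have h1 : (A * A.conjTranspose).det = ((‖A.det‖ ^ 2 : ℝ) : ℂ) := by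
      rw [Matrix.det_mul, Matrix.det_conjTranspose, Complex.star_def, Complex.mul_conj,
        Complex.normSq_eq_norm_sq]
    rw [h1] at hdet
    exact Complex.ofReal_injective (by rw [hdet]; push_cast; rfl)
  have : ∏ i, hH.eigenvalues i ≤ 1 := by
    calc ∏ i, hH.eigenvalues i ≤ ∏ i, Real.exp (hH.eigenvalues i - 1) :=
          Finset.prod_le_prod (fun i _ => hps.eigenvalues_nonneg i)
            (fun i _ => by linarith [Real.add_one_le_exp (hH.eigenvalues i - 1)])
      _ = 1 := by rw [← Real.exp_sum, Finset.sum_sub_distrib, htr']; simp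
  rw [hprod] at this
  exact (sq_le_one_iff₀ (norm_nonneg _)).1 this

noncomputable def DD {n : ℕ} (x : Fin n → ℂ) : ℝ :=
  ∑ i : Fin n, ∑ j : Fin n, (if i ≠ j then Real.log ‖x i - x j‖ else 0)

noncomputable def SS {n : ℕ} (x : Fin n → ℂ) : ℝ := ∑ i : Fin n, Real.log (1 + ‖x i‖ ^ 2)

lemma DD_eq {n : ℕ} (x : Fin n → ℂ) :
    DD x = 2 * ∑ i, ∑ j ∈ Finset.Ioi i, Real.log ‖x j - x i‖ := by
  have h1 : ∀ i j : Fin n, (if i ≠ j then Real.log ‖x i - x j‖ else 0)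
      = (if i < j then Real.log ‖x j - x i‖ else 0)
        + (if j < i then Real.log ‖x i - x j‖ else 0) := by
    intro i j
    rcases lt_trichotomy i j with h | h | h
    · simp [h, h.ne, h.not_gt, norm_sub_rev]
    · simp [h]
    · simp [h, h.ne', h.not_gt]
  have h2 : ∀ i : Fin n, ∑ j ∈ Finset.Ioi i, Real.log ‖x j - x i‖
      = ∑ j, (if i < j then Real.log ‖x j - x i‖ else 0) := by
    intro i
    rw [← Finset.sum_filter]
    congr 1
    ext; simp
  unfold DD
  simp_rw [h1, h2, Finset.sum_add_distrib]
  rw [Finset.sum_comm (f := fun i j : Fin n => (if j < i then Real.log ‖x i - x j‖ else 0))]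
  ring

/-- The Hadamard energy bound. -/
lemma energy_bound {M : ℕ} (x : Fin (M+1) → ℂ) (hx : Function.Injective x) :
    DD x + Real.log (∏ k ∈ Finset.range (M+1), (M.choose k : ℝ)) ≤ M * SS x := by
  let c : Fin (M+1) → ℝ := fun k => √(M.choose k)
  let d : Fin (M+1) → ℝ := fun i => (√(1 + ‖x i‖^2))⁻¹ ^ M
  have hdpos : ∀ i, 0 < d i := fun i => by positivity
  have hcpos : ∀ k, 0 < c k := fun k => by
    apply Real.sqrt_pos.2
    exact_mod_cast Nat.choose_pos (Nat.lt_succ_iff.1 k.2)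
  let A : Matrix (Fin (M+1)) (Fin (M+1)) ℂ :=
    Matrix.of fun i k => (d i : ℂ) * ((c k : ℂ) * Matrix.vandermonde x i k)
  have hA : ∀ i, ∑ k, ‖A i k‖ ^ 2 = 1 := by
    intro i
    have h1 : ∀ k, ‖A i k‖ ^ 2 = (1 + ‖x i‖^2)⁻¹ ^ M * ((‖x i‖^2) ^ (k:ℕ) * M.choose k) := by
      intro k
      simp only [A, Matrix.of_apply, Matrix.vandermonde_apply, norm_mul, norm_pow,
        Complex.norm_real, Real.norm_eq_abs, abs_of_pos (hdpos i), abs_of_pos (hcpos k), mul_pow]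
      simp only [c, d]
      rw [Real.sq_sqrt (by positivity), ← pow_mul, mul_comm M 2, pow_mul, inv_pow,
        Real.sq_sqrt (by positivity)]
      ring
    simp_rw [h1]
    rw [← Finset.mul_sum, Fin.sum_univ_eq_sum_range (fun k => (‖x i‖^2) ^ k * (M.choose k : ℝ))]
    have := add_pow (‖x i‖^2) 1 M
    simp only [one_pow, mul_one] at this
    rw [← this, ← mul_pow, add_comm, inv_mul_cancel₀ (by positivity), one_pow]
  have hdet := hadamard_unit A hA
  have hAdet : A.det = (∏ i, (d i : ℂ)) * ((∏ k, (c k : ℂ)) * (Matrix.vandermonde x).det) := by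
    have e := Matrix.det_mul_column (fun i => (d i : ℂ))
      (Matrix.of fun i k => (c k : ℂ) * Matrix.vandermonde x i k)
    have e' := Matrix.det_mul_row (fun i => (c i : ℂ)) (Matrix.vandermonde x)
    rw [← e', ← e]
    rfl
  rw [hAdet, Matrix.det_vandermonde] at hdet
  simp only [norm_mul, norm_prod, Complex.norm_real, Real.norm_eq_abs, abs_of_pos (hdpos _),
    abs_of_pos (hcpos _)] at hdet
  have hne : ∀ i, ∀ j ∈ Finset.Ioi i, ‖x j - x i‖ ≠ 0 := by
    intro i j hj
    rw [norm_ne_zero_iff, sub_ne_zero]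
    exact fun h => (Finset.mem_Ioi.1 hj).ne' (hx h)
  have hne' : ∀ i ∈ Finset.univ, ∏ j ∈ Finset.Ioi i, ‖x j - x i‖ ≠ 0 :=
    fun i _ => Finset.prod_ne_zero_iff.2 (hne i)
  have hd0 : ∏ i, d i ≠ 0 := Finset.prod_ne_zero_iff.2 fun i _ => (hdpos i).ne'
  have hc0 : ∏ i, c i ≠ 0 := Finset.prod_ne_zero_iff.2 fun i _ => (hcpos i).ne'
  have hV0 := Finset.prod_ne_zero_iff.2 hne'
  have hlog := Real.log_nonpos (by positivity) hdet
  rw [Real.log_mul hd0 (mul_ne_zero hc0 hV0), Real.log_mul hc0 hV0,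
    Real.log_prod hne', Real.log_prod (fun i _ => (hdpos i).ne'),
    Real.log_prod (fun i _ => (hcpos i).ne')] at hlog
  rw [Finset.sum_congr rfl (fun i _ => Real.log_prod (hne i))] at hlog
  have hld : ∑ i, Real.log (d i) = - (M/2) * SS x := by
    unfold SS
    rw [Finset.mul_sum]
    refine Finset.sum_congr rfl fun i _ => ?_
    simp only [d]
    rw [Real.log_pow, Real.log_inv, Real.log_sqrt (by positivity)]
    ring
  have hlc : Real.log (∏ k ∈ Finset.range (M+1), (M.choose k : ℝ)) = 2 * ∑ i, Real.log (c i) := by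
    rw [← Fin.prod_univ_eq_prod_range (fun k => (M.choose k : ℝ)), Real.log_prod, Finset.mul_sum]
    · refine Finset.sum_congr rfl fun i _ => ?_
      simp only [c]
      rw [Real.log_sqrt (by positivity)]
      ring
    · intro i _
      exact_mod_cast (Nat.choose_pos (Nat.lt_succ_iff.1 i.2)).ne'
  rw [DD_eq, hlc]
  rw [hld] at hlog
  linarith

lemma log_fact_le (n : ℕ) (hn : 1 ≤ n) :
    Real.log (n.factorial : ℝ) ≤ (n + 1) * Real.log n - n + 1 := by
  induction n, hn using Nat.le_induction with
  | base => simp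
  | succ n hn ih =>
    have hn0 : (0:ℝ) < n := by exact_mod_cast hn
    rw [Nat.factorial_succ]
    push_cast
    rw [Real.log_mul (by positivity) (by positivity)]
    have h := Real.one_sub_inv_le_log_of_pos (x := ((n:ℝ)+1)/n) (by positivity)
    rw [Real.log_div (by positivity) (by positivity)] at h
    have h2 : ((n:ℝ)+1) * (1 - (((n:ℝ)+1)/n)⁻¹) = 1 := by field_simp; ring
    have h3 := mul_le_mul_of_nonneg_left h (by positivity : (0:ℝ) ≤ n + 1)
    rw [h2] at h3
    nlinarith

lemma choose_rec (M : ℕ) :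
    (∏ k ∈ Finset.range (M+1), (M.choose k)) * (M+1)^(M+1)
      = (∏ k ∈ Finset.range (M+2), ((M+1).choose k)) * (M+1).factorial := by
  rw [Finset.prod_range_succ _ (M+1), Nat.choose_self, mul_one]
  have : (M+1).factorial = ∏ k ∈ Finset.range (M+1), (M+1-k) := by
    rw [← Finset.prod_range_add_one_eq_factorial, ← Finset.prod_range_reflect]
    refine Finset.prod_congr rfl fun k hk => ?_
    have := Finset.mem_range.1 hk
    omega
  rw [this, ← Finset.prod_mul_distrib, ← Finset.card_range (M+1), ← Finset.prod_const,
    Finset.card_range, ← Finset.prod_mul_distrib]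
  refine Finset.prod_congr rfl fun k _ => ?_
  exact Nat.choose_mul_succ_eq M k

lemma log_choose (M : ℕ) :
    (M:ℝ) * (M+1) / 2 - M * (1 + Real.log (M+1))
      ≤ Real.log (∏ k ∈ Finset.range (M+1), (M.choose k : ℝ)) := by
  induction M with
  | zero => simp
  | succ M ih =>
    have h : (∏ k ∈ Finset.range (M+1), (M.choose k : ℝ)) * ((M:ℝ)+1)^(M+1)
      = (∏ k ∈ Finset.range (M+2), ((M+1).choose k : ℝ)) * ((M+1).factorial : ℝ) := by
      exact_mod_cast choose_rec M
    have p1 : ∀ M : ℕ, (∏ k ∈ Finset.range (M+1), (M.choose k : ℝ)) ≠ 0 := by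
      intro M
      refine Finset.prod_ne_zero_iff.2 fun k hk => ?_
      exact_mod_cast (Nat.choose_pos (Nat.lt_succ_iff.1 (Finset.mem_range.1 hk))).ne'
    have h2 := congrArg Real.log h
    rw [Real.log_mul (p1 M) (by positivity), Real.log_mul (p1 (M+1)) (by positivity),
      Real.log_pow] at h2
    have h3 := log_fact_le (M+1) (by omega)
    push_cast at h2 h3 ⊢
    have h4 : Real.log ((M:ℝ)+1) ≤ Real.log ((M:ℝ)+1+1) :=
      Real.log_le_log (by positivity) (by linarith)
    have h5 : (M:ℝ) * Real.log ((M:ℝ)+1) ≤ M * Real.log ((M:ℝ)+1+1) :=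
      mul_le_mul_of_nonneg_left h4 (by positivity)
    nlinarith

open Topology in
lemma tendsto_aux : Tendsto (fun t : ℝ => Real.log t * (t / (1+t)) - Real.log (1+t))
    atTop (𝓝 0) := by
  have h1 : Tendsto (fun t : ℝ => Real.log (1+t) - Real.log t) atTop (𝓝 0) := by
    have := Real.tendsto_log_comp_add_sub_log 1
    simpa [add_comm] using this
  have h2 : Tendsto (fun t : ℝ => Real.log t / (1+t)) atTop (𝓝 0) := by
    have : Tendsto (fun t : ℝ => (Real.log t / t)) atTop (𝓝 0) := by
      simpa using Real.tendsto_pow_log_div_mul_add_atTop 1 0 1 one_ne_zero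
    refine squeeze_zero' ?_ ?_ this
    · filter_upwards [eventually_ge_atTop 1] with t ht
      exact div_nonneg (Real.log_nonneg ht) (by linarith)
    · filter_upwards [eventually_ge_atTop 1] with t ht
      exact div_le_div_of_nonneg_left (Real.log_nonneg ht) (by linarith) (by linarith)
  have h3 := (h1.add h2).neg
  simp only [add_zero, neg_zero] at h3
  refine h3.congr' ?_
  filter_upwards [eventually_ge_atTop 1] with t ht
  have : 1 + t ≠ 0 := by positivity
  field_simp
  ring

noncomputable def BB (s t : ℝ) : ℝ :=
  Real.log (max t s) * (t / (1+t)) - Real.log (1 + max t s) + Real.log (1+s)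

lemma BB_deriv (s t : ℝ) (ht : 0 < t) :
    HasDerivWithinAt (BB s) (Real.log (max t s) / (1+t)^2) (Set.Ici t) t := by
  have hq : HasDerivAt (fun t : ℝ => t / (1+t)) (1/(1+t)^2) t := by
    have := (hasDerivAt_id t).div ((hasDerivAt_id t).const_add 1)
      (by simp only [id]; positivity)
    refine this.congr_deriv ?_
    simp
  rcases lt_or_ge t s with h | h
  · have : HasDerivAt (fun t => Real.log s * (t/(1+t)) - Real.log (1+s) + Real.log (1+s))
        (Real.log s * (1/(1+t)^2)) t :=
      (((hq.const_mul _).sub_const _).add_const _)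
    rw [max_eq_right h.le]
    refine HasDerivAt.hasDerivWithinAt ?_
    rw [div_eq_mul_one_div]
    refine this.congr_of_eventuallyEq ?_
    filter_upwards [eventually_lt_nhds h] with u hu
    simp [BB, max_eq_right hu.le]
  · have : HasDerivAt (fun t => Real.log t * (t/(1+t)) - Real.log (1+t) + Real.log (1+s))
        (Real.log t / (1+t)^2) t := by
      have l1 := (Real.hasDerivAt_log ht.ne').mul hq
      have l2 := ((hasDerivAt_id t).const_add 1).log (by simp only [id]; positivity)
      have := (l1.sub l2).add_const (Real.log (1+s))
      refine this.congr_deriv ?_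
      simp only [id]
      field_simp
      ring
    rw [max_eq_left h]
    refine this.hasDerivWithinAt.congr ?_ ?_
    · intro u hu
      simp [BB, max_eq_left (h.trans hu)]
    · simp [BB, max_eq_left h]

lemma BB_cont (s : ℝ) (hs : 0 ≤ s) : ContinuousOn (BB s) (Set.Ici 0) := by
  unfold BB
  have hm : Continuous fun t : ℝ => max t s := by fun_prop
  have h2 : ContinuousOn (fun t => Real.log (1 + max t s)) (Set.Ici 0) := by
    refine ContinuousOn.log (by fun_prop) ?_
    intro t ht
    have : 0 ≤ max t s := hs.trans (le_max_right _ _)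
    positivity
  have h1 : ContinuousOn (fun t => Real.log (max t s) * (t / (1+t))) (Set.Ici 0) := by
    rcases hs.eq_or_lt with h | h
    · subst h
      have : ContinuousOn (fun t : ℝ => (t * Real.log t) / (1+t)) (Set.Ici 0) := by
        refine ContinuousOn.div Real.continuous_mul_log.continuousOn (by fun_prop) ?_
        intro t ht
        have : (0:ℝ) ≤ t := ht
        positivity
      refine this.congr ?_
      intro t ht
      simp only [max_eq_left (show (0:ℝ) ≤ t from ht)]
      ring
    · refine ContinuousOn.mul ?_ ?_
      · refine ContinuousOn.log (by fun_prop) ?_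
        intro t _
        exact (h.trans_le (le_max_right _ _)).ne'
      · refine ContinuousOn.div (by fun_prop) (by fun_prop) ?_
        intro t ht
        have : (0:ℝ) ≤ t := ht
        positivity
  exact (h1.sub h2).add continuousOn_const

open Topology in
lemma BB_tendsto (s : ℝ) : Tendsto (BB s) atTop (𝓝 (Real.log (1+s))) := by
  have := tendsto_aux.add_const (Real.log (1+s))
  rw [zero_add] at this
  refine this.congr' ?_
  filter_upwards [eventually_ge_atTop s] with t ht
  simp [BB, max_eq_left ht]

noncomputable def GG (c n t : ℝ) : ℝ := -(c + n * (Real.log (1+t) + 1)) / (1+t)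

lemma GG_deriv (c n t : ℝ) (ht : 0 ≤ t) :
    HasDerivAt (GG c n) ((c + n * Real.log (1+t)) / (1+t)^2) t := by
  have hp : 1 + id t ≠ 0 := by simp only [id]; positivity
  have l2 := ((hasDerivAt_id t).const_add 1).log hp
  have := ((((l2.add_const 1).const_mul n).const_add c).neg).div ((hasDerivAt_id t).const_add 1) hp
  refine this.congr_deriv ?_
  have : 1 + t ≠ 0 := by positivity
  simp only [id, Pi.neg_apply]
  field_simp
  ring

open Topology in
lemma GG_tendsto (c n : ℝ) : Tendsto (GG c n) atTop (𝓝 0) := by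
  have h1 : Tendsto (fun t : ℝ => Real.log t / t) atTop (𝓝 0) := by
    simpa using Real.tendsto_pow_log_div_mul_add_atTop 1 0 1 one_ne_zero
  have h2 : Tendsto (fun t : ℝ => (c+n) * t⁻¹ + n * (Real.log t / t)) atTop (𝓝 0) := by
    simpa using (tendsto_inv_atTop_zero.const_mul (c+n)).add (h1.const_mul n)
  have h3 := (h2.comp (tendsto_atTop_add_const_left atTop (1:ℝ) tendsto_id)).neg
  rw [neg_zero] at h3
  refine h3.congr ?_
  intro t
  simp only [Function.comp, GG, id]
  ring

open Topology in
lemma mix {ι : Type*} (J : Finset ι) (s : ι → ℝ) (hs : ∀ j, 0 ≤ s j) (c n : ℝ)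
    (h : ∀ t, 0 < t → ∑ j ∈ J, Real.log (max t (s j)) ≤ c + n * Real.log (1+t)) :
    ∑ j ∈ J, Real.log (1 + s j) ≤ c + n := by
  have key : ∀ a b : ℝ, 0 < a → a ≤ b →
      ∑ j ∈ J, BB (s j) b - ∑ j ∈ J, BB (s j) a ≤ GG c n b - GG c n a := by
    intro a b ha hab
    have := image_le_of_deriv_right_le_deriv_boundary (a := a) (b := b)
      (f := fun t => ∑ j ∈ J, BB (s j) t - ∑ j ∈ J, BB (s j) a)
      (f' := fun t => ∑ j ∈ J, Real.log (max t (s j)) / (1+t)^2)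
      (B := fun t => GG c n t - GG c n a)
      (B' := fun t => (c + n * Real.log (1+t)) / (1+t)^2)
      (by
        refine ContinuousOn.sub ?_ continuousOn_const
        refine continuousOn_finsetSum _ fun j _ => (BB_cont (s j) (hs j)).mono ?_
        intro t ht
        exact ha.le.trans ht.1)
      (by
        intro t ht
        refine HasDerivWithinAt.sub_const _ ?_
        exact HasDerivWithinAt.fun_sum fun j _ => BB_deriv (s j) t (ha.trans_le ht.1))
      (by simp)
      (by
        intro t ht
        exact ((GG_deriv c n t (ha.le.trans ht.1)).sub_const _).continuousAt.continuousWithinAt)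
      (by
        intro t ht
        exact ((GG_deriv c n t (ha.le.trans ht.1)).sub_const _).hasDerivWithinAt)
      (by
        intro t ht
        have h0 : 0 < t := ha.trans_le ht.1
        rw [← Finset.sum_div]
        exact div_le_div_of_nonneg_right (h t h0) (by positivity))
    exact this ⟨hab, le_rfl⟩
  have key2 : ∀ a : ℝ, 0 < a →
      ∑ j ∈ J, Real.log (1 + s j) - ∑ j ∈ J, BB (s j) a ≤ 0 - GG c n a := by
    intro a ha
    refine le_of_tendsto_of_tendsto
      ((tendsto_finsetSum J fun j _ => BB_tendsto (s j)).sub_const _)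
      ((GG_tendsto c n).sub_const _) ?_
    filter_upwards [eventually_ge_atTop a] with b hb
    exact key a b ha hb
  have hB0 : Tendsto (fun a => ∑ j ∈ J, BB (s j) a) (𝓝[>] 0) (𝓝 (∑ j ∈ J, 0)) := by
    refine tendsto_finsetSum J fun j _ => ?_
    have h1 : Tendsto (BB (s j)) (𝓝[≥] 0) (𝓝 (BB (s j) 0)) := BB_cont (s j) (hs j) 0 (by simp)
    have h2 : BB (s j) 0 = 0 := by simp [BB, max_eq_right (hs j)]
    rw [h2] at h1
    exact h1.mono_left (nhdsWithin_mono _ Set.Ioi_subset_Ici_self)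
  have hG0 : Tendsto (GG c n) (𝓝[>] 0) (𝓝 (-(c+n))) := by
    have h1 := (GG_deriv c n 0 le_rfl).continuousAt.tendsto
    have h2 : GG c n 0 = -(c+n) := by simp [GG]
    rw [h2] at h1
    exact h1.mono_left nhdsWithin_le_nhds
  have := le_of_tendsto_of_tendsto (hB0.const_sub (∑ j ∈ J, Real.log (1 + s j)))
    (hG0.const_sub 0) (by
      filter_upwards [self_mem_nhdsWithin] with a ha
      exact key2 a ha)
  simpa using this

open Topology in
lemma muV_integral : ∫ a, Real.log (1 + ‖a‖^2) ∂muV = 1 := by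
  unfold muV
  rw [integral_withDensity_eq_integral_toReal_smul (by fun_prop) (by simp)]
  have h1 : ∀ a : EuclideanSpace ℝ (Fin 2),
      (ENNReal.ofReal (1 / (π * (1 + ‖a‖^2)^2))).toReal • Real.log (1 + ‖a‖^2)
      = (fun r : ℝ => 1 / (π * (1 + r^2)^2) * Real.log (1 + r^2)) ‖a‖ := by
    intro a
    rw [ENNReal.toReal_ofReal (by positivity), smul_eq_mul]
  rw [integral_congr_ae (ae_of_all _ h1),
    integral_fun_norm_addHaar (volume : Measure (EuclideanSpace ℝ (Fin 2)))
      (fun r : ℝ => 1 / (π * (1 + r^2)^2) * Real.log (1 + r^2))]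
  have hv : (volume : Measure (EuclideanSpace ℝ (Fin 2))).real (Metric.ball 0 1) = π := by
    rw [Measure.real, EuclideanSpace.volume_ball]
    have h2 : Real.Gamma (1 + 1) = 1 := by
      rw [one_add_one_eq_two, Real.Gamma_two]
    simp [Real.pi_pos.le, h2]
  rw [hv]
  simp only [finrank_euclideanSpace, Fintype.card_fin, nsmul_eq_mul, smul_eq_mul]
  have hd : ∀ r ∈ Set.Ioi (0:ℝ), HasDerivAt (fun r : ℝ => -(Real.log (1+r^2) + 1) / (1+r^2))
      (2 * r * Real.log (1+r^2) / (1+r^2)^2) r := by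
    intro r _
    have hp : 1 + r^2 ≠ 0 := by positivity
    have q : HasDerivAt (fun r : ℝ => 1 + r^2) (2*r) r := by
      simpa using (hasDerivAt_pow 2 r).const_add 1
    have := (((q.log hp).add_const 1).neg).div q hp
    refine this.congr_deriv ?_
    simp only [Pi.neg_apply]
    field_simp
    ring
  have hI := integral_Ioi_of_hasDerivAt_of_nonneg (a := 0)
    (g := fun r : ℝ => -(Real.log (1+r^2) + 1) / (1+r^2)) (l := 0)
    (g' := fun r => 2 * r * Real.log (1+r^2) / (1+r^2)^2) (by
      refine ContinuousAt.continuousWithinAt ?_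
      have : ∀ r : ℝ, 1 + r^2 ≠ 0 := fun r => by positivity
      have : Continuous (fun r : ℝ => -(Real.log (1+r^2) + 1) / (1+r^2)) := by
        fun_prop (disch := assumption)
      exact this.continuousAt) hd (by
      intro r hr
      have hr' : (0:ℝ) < r := hr
      have := Real.log_nonneg (x := 1 + r^2) (by nlinarith)
      positivity) (by
      have h1 : Tendsto (fun t : ℝ => Real.log t / t) atTop (𝓝 0) := by
        simpa using Real.tendsto_pow_log_div_mul_add_atTop 1 0 1 one_ne_zero
      have h2 : Tendsto (fun t : ℝ => t⁻¹ + (Real.log t / t)) atTop (𝓝 0) := by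
        simpa using tendsto_inv_atTop_zero.add h1
      have h3 := (h2.comp ((tendsto_atTop_add_const_left atTop (1:ℝ)
        (tendsto_pow_atTop (n := 2) two_ne_zero)))).neg
      rw [neg_zero] at h3
      refine h3.congr ?_
      intro t
      simp only [Function.comp]
      ring)
  simp only [zero_pow two_ne_zero, add_zero, Real.log_one, zero_add, div_one, sub_neg_eq_add] at hI
  have e : ∀ y : ℝ, y ^ (2-1) * (1 / (π * (1 + y^2)^2) * Real.log (1 + y^2))
      = (1/(2*π)) * (2 * y * Real.log (1+y^2) / (1+y^2)^2) := by
    intro y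
    have : 1 + y^2 ≠ 0 := by positivity
    field_simp
    simp
  simp_rw [e]
  rw [integral_const_mul, hI]
  have := Real.pi_pos.ne'
  push_cast
  field_simp

lemma add_point {k : ℕ} (z : Fin k → ℂ) (hz : Function.Injective z) (R : ℝ) (hR : 0 < R) :
    ∃ z' : Fin (k+1) → ℂ, Function.Injective z' ∧ DD z + 2 * k * Real.log R ≤ DD z' ∧
      SS z' = SS z + Real.log (1 + R^2) := by
  obtain ⟨y, hy, hp⟩ := exists_circle Finset.univ z R hR
  have hp' : R ^ k ≤ ∏ j, ‖y - z j‖ := by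
    refine le_trans ?_ hp
    calc R ^ k = ∏ _j : Fin k, R := by simp
      _ ≤ _ := Finset.prod_le_prod (fun _ _ => hR.le) (fun _ _ => le_max_left _ _)
  have hpos : 0 < ∏ j, ‖y - z j‖ := lt_of_lt_of_le (by positivity) hp'
  have hne : ∀ j, ‖y - z j‖ ≠ 0 := fun j =>
    Finset.prod_ne_zero_iff.1 hpos.ne' j (Finset.mem_univ j)
  refine ⟨Fin.cons y z, ?_, ?_, ?_⟩
  · rw [Fin.cons_injective_iff]
    refine ⟨?_, hz⟩
    rintro ⟨j, hj⟩
    exact hne j (by simp [hj])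
  · have hlog := Real.log_le_log (by positivity) hp'
    rw [Real.log_pow, Real.log_prod (fun j _ => hne j)] at hlog
    have : DD (Fin.cons y z : Fin (k+1) → ℂ) = DD z + 2 * ∑ j, Real.log ‖y - z j‖ := by
      unfold DD
      simp only [Fin.sum_univ_succ, Fin.cons_zero, Fin.cons_succ, ne_eq, not_true_eq_false,
        if_false, Fin.succ_ne_zero, not_false_eq_true, if_true, (Fin.succ_ne_zero _).symm,
        Fin.succ_inj, Finset.sum_add_distrib, zero_add]
      simp only [norm_sub_rev _ y]
      ring
    rw [this]
    linarith
  · unfold SS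
    simp only [Fin.sum_univ_succ, Fin.cons_zero, Fin.cons_succ, hy]
    ring

lemma add_points {n : ℕ} (x : Fin n → ℂ) (hx : Function.Injective x) (R : ℝ) (hR : 0 < R)
    (m : ℕ) :
    ∃ z : Fin (n+m) → ℂ, Function.Injective z ∧
      DD x + (2 * n * m + m * (m-1)) * Real.log R ≤ DD z ∧
      SS z = SS x + m * Real.log (1 + R^2) := by
  induction m with
  | zero => exact ⟨x, hx, by simp, by simp⟩
  | succ m ih =>
    obtain ⟨z, h1, h2, h3⟩ := ih
    obtain ⟨z', h1', h2', h3'⟩ := add_point z h1 R hR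
    refine ⟨z', h1', ?_, ?_⟩
    · push_cast at h2' ⊢
      linarith
    · rw [h3', h3]; push_cast; ring

lemma gen {ι : Type*} (J : Finset ι) (x : ι → ℂ) (c : ℝ) (n : ℕ)
    (h : ∀ z : ℂ, (∀ j ∈ J, z ≠ x j) →
      2 * ∑ j ∈ J, Real.log ‖z - x j‖ ≤ c + n * Real.log (1 + ‖z‖^2)) :
    ∑ j ∈ J, Real.log (1 + ‖x j‖^2) ≤ c + n := by
  refine mix J (fun j => ‖x j‖^2) (fun j => by positivity) c n ?_
  intro t ht
  have hR : 0 < √t := Real.sqrt_pos.2 ht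
  obtain ⟨y, hy, hp⟩ := exists_circle J x (√t) hR
  have hm : ∀ j, 0 < max (√t) ‖x j‖ := fun j => lt_of_lt_of_le hR (le_max_left _ _)
  have hpos : 0 < ∏ j ∈ J, max (√t) ‖x j‖ := Finset.prod_pos fun j _ => hm j
  have hne : ∀ j ∈ J, ‖y - x j‖ ≠ 0 := fun j hj =>
    Finset.prod_ne_zero_iff.1 (hpos.trans_le hp).ne' j hj
  have h1 := h y (fun j hj e => hne j hj (by simp [e]))
  have hlog := Real.log_le_log hpos hp
  rw [Real.log_prod (fun j _ => (hm j).ne'), Real.log_prod hne] at hlog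
  have h2 : ∀ j, Real.log (max t (‖x j‖^2)) = 2 * Real.log (max (√t) ‖x j‖) := by
    intro j
    have : max t (‖x j‖^2) = (max (√t) ‖x j‖)^2 := by
      rcases le_total (√t) (‖x j‖) with hh | hh
      · rw [max_eq_right hh, max_eq_right]
        exact (Real.sqrt_le_left (norm_nonneg _)).1 hh
      · rw [max_eq_left hh, Real.sq_sqrt ht.le, max_eq_left]
        calc ‖x j‖^2 ≤ (√t)^2 := by gcongr
          _ = t := Real.sq_sqrt ht.le
    rw [this, Real.log_pow]; norm_num
  simp_rw [h2]
  rw [← Finset.mul_sum]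
  rw [hy, Real.sq_sqrt ht.le] at h1
  linarith

def IsMinC {n : ℕ} (x : Fin n → ℂ) : Prop :=
  Function.Injective x ∧ ∀ z : Fin n → ℂ, Function.Injective z →
    -DD x + n * SS x ≤ -DD z + n * SS z

lemma sum_offdiag {n : ℕ} (g : Fin n → ℝ) :
    ∑ i : Fin n, ∑ j : Fin n, (if i ≠ j then g j else 0) = (n - 1) * ∑ i, g i := by
  have : ∀ i j : Fin n, (if i ≠ j then g j else 0) = g j - (if i = j then g j else 0) := by
    intro i j; split_ifs <;> simp_all
  simp_rw [this, Finset.sum_sub_distrib]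
  simp
  ring

lemma sum_offdiag' {n : ℕ} (g : Fin n → ℝ) :
    ∑ i : Fin n, ∑ j : Fin n, (if i ≠ j then g i else 0) = (n - 1) * ∑ i, g i := by
  rw [Finset.sum_comm, ← sum_offdiag]
  simp_rw [ne_comm]

lemma SS_le {n : ℕ} (x : Fin n → ℂ) (h : IsMinC x) : SS x ≤ n := by
  have := gen Finset.univ x 0 n (by
    intro z hz
    replace hz : ∀ j, z ≠ x j := fun j => hz j (Finset.mem_univ j)
    have hz' : ∀ j, x j - z ≠ 0 := fun j => sub_ne_zero.2 (hz j).symm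
    have hzn : ∀ j, ‖x j - z‖ ≠ 0 := fun j => norm_ne_zero_iff.2 (hz' j)
    let y : Fin n → ℂ := fun i => (1 + starRingEnd ℂ z * x i) / (x i - z)
    have hnz : (1 + z * starRingEnd ℂ z) = ((1 + ‖z‖^2 : ℝ) : ℂ) := by
      rw [Complex.mul_conj, Complex.normSq_eq_norm_sq]; push_cast; rfl
    have hdiff : ∀ i j, y i - y j
        = ((1 + ‖z‖^2 : ℝ) : ℂ) * (x j - x i) / ((x i - z) * (x j - z)) := by
      intro i j
      rw [← hnz]
      simp only [y]
      rw [div_sub_div _ _ (hz' i) (hz' j)]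
      congr 1
      ring
    have hpz : (0:ℝ) < 1 + ‖z‖^2 := by positivity
    have hdn : ∀ i j, ‖y i - y j‖ = (1 + ‖z‖^2) * ‖x i - x j‖ / (‖x i - z‖ * ‖x j - z‖) := by
      intro i j
      rw [hdiff, norm_div, norm_mul, norm_mul, Complex.norm_real, Real.norm_eq_abs,
        abs_of_pos hpz, norm_sub_rev (x j)]
    have hyinj : Function.Injective y := by
      intro i j hij
      have h0 : ‖y i - y j‖ = 0 := by simp [hij]
      rw [hdn] at h0
      have h1 : ‖x i - x j‖ = 0 := by
        by_contra hne
        have hne' := hzn i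
        have hne'' := hzn j
        exact (div_ne_zero (mul_ne_zero hpz.ne' hne) (mul_ne_zero hne' hne'')) h0
      exact h.1 (sub_eq_zero.1 (norm_eq_zero.1 h1))
    have hy1 : ∀ i, 1 + ‖y i‖^2 = (1 + ‖z‖^2) * (1 + ‖x i‖^2) / ‖x i - z‖^2 := by
      intro i
      have e : ‖x i - z‖^2 + ‖1 + starRingEnd ℂ z * x i‖^2 = (1 + ‖z‖^2) * (1 + ‖x i‖^2) := by
        simp only [← Complex.normSq_eq_norm_sq, Complex.normSq_apply]
        simp
        ring
      have := hzn i
      simp only [y, norm_div, div_pow]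
      rw [← e]
      field_simp
    have hDD : DD y = DD x + n * (n-1) * Real.log (1 + ‖z‖^2)
        - 2 * (n-1) * ∑ i, Real.log ‖x i - z‖ := by
      have e : ∀ i j, (if i ≠ j then Real.log ‖y i - y j‖ else 0)
          = (if i ≠ j then Real.log ‖x i - x j‖ else 0)
            + (if i ≠ j then Real.log (1 + ‖z‖^2) else 0)
            - ((if i ≠ j then Real.log ‖x i - z‖ else 0)
            + (if i ≠ j then Real.log ‖x j - z‖ else 0)) := by
        intro i j
        by_cases hij : i = j
        · simp [hij]
        · have hx0 : ‖x i - x j‖ ≠ 0 := norm_ne_zero_iff.2 (sub_ne_zero.2 fun e => hij (h.1 e))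
          simp only [ne_eq, hij, not_false_eq_true, if_true]
          rw [hdn, Real.log_div (mul_ne_zero hpz.ne' hx0) (mul_ne_zero (hzn i) (hzn j)),
            Real.log_mul hpz.ne' hx0, Real.log_mul (hzn i) (hzn j)]
          ring
      unfold DD
      simp_rw [e, Finset.sum_sub_distrib, Finset.sum_add_distrib]
      rw [sum_offdiag (fun j => Real.log ‖x j - z‖), sum_offdiag' (fun j => Real.log ‖x j - z‖),
        sum_offdiag (fun _ => Real.log (1 + ‖z‖^2))]
      simp
      ring
    have hSS : SS y = SS x + n * Real.log (1 + ‖z‖^2) - 2 * ∑ i, Real.log ‖x i - z‖ := by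
      unfold SS
      have e : ∀ i, Real.log (1 + ‖y i‖^2)
          = Real.log (1 + ‖z‖^2) + Real.log (1 + ‖x i‖^2) - 2 * Real.log ‖x i - z‖ := by
        intro i
        rw [hy1, Real.log_div (by positivity) (pow_ne_zero 2 (hzn i)),
          Real.log_mul (by positivity) (by positivity), Real.log_pow]
        norm_num
      simp_rw [e, Finset.sum_sub_distrib, Finset.sum_add_distrib]
      rw [← Finset.mul_sum]
      simp
      ring
    have hm := h.2 y hyinj
    rw [hDD, hSS] at hm
    simp_rw [norm_sub_rev z]
    linarith)
  simpa [SS] using this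

lemma DD_split {n : ℕ} (x : Fin n → ℂ) (i : Fin n) :
    DD x = 2 * ∑ j ∈ Finset.univ.erase i, Real.log ‖x i - x j‖
      + ∑ a ∈ Finset.univ.erase i, ∑ b ∈ Finset.univ.erase i,
        (if a ≠ b then Real.log ‖x a - x b‖ else 0) := by
  unfold DD
  rw [← Finset.add_sum_erase _ _ (Finset.mem_univ i),
    ← Finset.add_sum_erase _ _ (Finset.mem_univ i)]
  have e : ∀ a ∈ Finset.univ.erase i,
      ∑ b, (if a ≠ b then Real.log ‖x a - x b‖ else 0)
      = Real.log ‖x i - x a‖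
        + ∑ b ∈ Finset.univ.erase i, (if a ≠ b then Real.log ‖x a - x b‖ else 0) := by
    intro a ha
    rw [← Finset.add_sum_erase _ _ (Finset.mem_univ i), if_pos (Finset.ne_of_mem_erase ha),
      norm_sub_rev]
  have e' : ∑ b ∈ Finset.univ.erase i, (if i ≠ b then Real.log ‖x i - x b‖ else 0)
      = ∑ b ∈ Finset.univ.erase i, Real.log ‖x i - x b‖ :=
    Finset.sum_congr rfl fun b hb => if_pos (Finset.ne_of_mem_erase hb).symm
  rw [Finset.sum_congr rfl e, Finset.sum_add_distrib, e']
  simp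
  ring

lemma DD_ge {n : ℕ} (x : Fin n → ℂ) (h : IsMinC x) : (2 * n - 1) * SS x - n^2 ≤ 2 * DD x := by
  have hi : ∀ i : Fin n, ∑ j ∈ Finset.univ.erase i, Real.log (1 + ‖x j‖^2)
      ≤ (2 * ∑ j ∈ Finset.univ.erase i, Real.log ‖x i - x j‖ - n * Real.log (1 + ‖x i‖^2)) + n := by
    intro i
    refine gen _ x _ n ?_
    intro z hz
    let y : Fin n → ℂ := Function.update x i z
    have hyi : y i = z := by simp [y]
    have hyj : ∀ j ∈ Finset.univ.erase i, y j = x j := by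
      intro j hj
      simp [y, Finset.ne_of_mem_erase hj]
    have hyinj : Function.Injective y := by
      intro a b hab
      by_cases ha : a = i <;> by_cases hb : b = i
      · rw [ha, hb]
      · subst ha
        rw [hyi, hyj b (by simp [hb])] at hab
        exact absurd hab (hz b (by simp [hb]))
      · subst hb
        rw [hyi, hyj a (by simp [ha])] at hab
        exact absurd hab.symm (hz a (by simp [ha]))
      · rw [hyj a (by simp [ha]), hyj b (by simp [hb])] at hab
        exact h.1 hab
    have hm := h.2 y hyinj
    rw [DD_split x i, DD_split y i] at hm
    have e1 : ∑ a ∈ Finset.univ.erase i, ∑ b ∈ Finset.univ.erase i,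
        (if a ≠ b then Real.log ‖y a - y b‖ else 0)
        = ∑ a ∈ Finset.univ.erase i, ∑ b ∈ Finset.univ.erase i,
        (if a ≠ b then Real.log ‖x a - x b‖ else 0) :=
      Finset.sum_congr rfl fun a ha => Finset.sum_congr rfl fun b hb => by
        rw [hyj a ha, hyj b hb]
    have e2 : ∑ j ∈ Finset.univ.erase i, Real.log ‖y i - y j‖
        = ∑ j ∈ Finset.univ.erase i, Real.log ‖z - x j‖ :=
      Finset.sum_congr rfl fun b hb => by rw [hyj b hb, hyi]
    have e3 : SS y = Real.log (1 + ‖z‖^2) + ∑ j ∈ Finset.univ.erase i, Real.log (1 + ‖x j‖^2) := by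
      unfold SS
      rw [← Finset.add_sum_erase _ _ (Finset.mem_univ i), hyi]
      congr 1
      exact Finset.sum_congr rfl fun b hb => by rw [hyj b hb]
    have e4 : SS x = Real.log (1 + ‖x i‖^2)
        + ∑ j ∈ Finset.univ.erase i, Real.log (1 + ‖x j‖^2) := by
      unfold SS
      rw [← Finset.add_sum_erase _ _ (Finset.mem_univ i)]
    rw [e1, e2, e3, e4] at hm
    linarith
  have hsum := Finset.sum_le_sum fun i (_ : i ∈ Finset.univ) => hi i
  rw [Finset.sum_add_distrib, Finset.sum_sub_distrib, ← Finset.mul_sum, ← Finset.mul_sum] at hsum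
  have f1 : ∑ i : Fin n, ∑ j ∈ Finset.univ.erase i, Real.log (1 + ‖x j‖^2) = (n-1) * SS x := by
    unfold SS
    rw [← sum_offdiag]
    refine Finset.sum_congr rfl fun i _ => ?_
    rw [← Finset.sum_filter]
    congr 1
    ext j; simp [eq_comm]
  have f2 : ∑ i : Fin n, ∑ j ∈ Finset.univ.erase i, Real.log ‖x i - x j‖ = DD x := by
    unfold DD
    refine Finset.sum_congr rfl fun i _ => ?_
    rw [← Finset.sum_filter]
    congr 1
    ext j; simp [eq_comm]
  rw [f1, f2] at hsum
  change (n-1) * SS x ≤ 2 * DD x - n * SS x + _ at hsum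
  simp at hsum
  linarith

lemma SS_ge {n : ℕ} (hn : 1 ≤ n) (x : Fin n → ℂ) (h : IsMinC x) :
    n - 1 - 8 * √n - 6 * (√n * (Real.log 2 + Real.log n)) ≤ SS x := by
  have hn1 : (1:ℝ) ≤ n := by exact_mod_cast hn
  have hn0 : (0:ℝ) < n := by linarith
  obtain ⟨m, hm1, hmn, hnm⟩ : ∃ m : ℕ, 1 ≤ m ∧ m * m ≤ n ∧ n < (m+1) * (m+1) :=
    ⟨Nat.sqrt n, Nat.le_sqrt.2 (by simpa using hn), Nat.sqrt_le n, Nat.lt_succ_sqrt n⟩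
  have hR : 0 < √(n:ℝ) := Real.sqrt_pos.2 hn0
  obtain ⟨z, z1, z2, z3⟩ := add_points x h.1 (√n) hR m
  obtain ⟨M, hM⟩ : ∃ M, n + m = M + 1 := ⟨n + m - 1, by omega⟩
  have hMr : (M:ℝ) = n + m - 1 := by
    have : (n:ℝ) + m = M + 1 := by exact_mod_cast hM
    linarith
  have hE : ∀ (K : ℕ) (z : Fin K → ℂ), Function.Injective z → K = M + 1 →
      DD z + ((M:ℝ) * (M+1) / 2 - M * (1 + Real.log (M+1))) ≤ M * SS z := by
    intro K z hz hK
    subst hK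
    linarith [energy_bound z hz, log_choose M]
  have hE' := hE _ z z1 hM
  have hD := DD_ge x h
  have hS0 : 0 ≤ SS x := Finset.sum_nonneg fun i _ => Real.log_nonneg (by
    have := sq_nonneg ‖x i‖
    linarith)
  have hm1r : (1:ℝ) ≤ m := by exact_mod_cast hm1
  have hmnr : (m:ℝ) * m ≤ n := by exact_mod_cast hmn
  have hnmr : (n:ℝ) < (m+1) * (m+1) := by exact_mod_cast hnm
  have hms : (m:ℝ) ≤ √n := Real.le_sqrt_of_sq_le (by nlinarith)
  have hlR : 2 * Real.log (√(n:ℝ)) = Real.log n := by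
    rw [Real.log_sqrt hn0.le]; ring
  have hln : 0 ≤ Real.log n := Real.log_nonneg hn1
  rw [z3, Real.sq_sqrt hn0.le] at hE'
  set l := Real.log (n:ℝ) with hl
  set q := Real.log 2 + l with hq
  have hq0 : 0 ≤ q := by
    have := Real.log_nonneg (x := 2) (by norm_num)
    linarith
  have hq2 : Real.log (2 * n) = q := Real.log_mul two_ne_zero hn0.ne'
  have l1 : Real.log (1 + (n:ℝ)) ≤ q := by
    rw [← hq2]; exact Real.log_le_log (by positivity) (by linarith)
  have hmn' : (m:ℝ) ≤ n := by nlinarith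
  have l2 : Real.log ((M:ℝ) + 1) ≤ q := by
    rw [← hq2]; exact Real.log_le_log (by positivity) (by rw [hMr]; linarith)
  have l3 : (n:ℝ) * (Real.log (1 + (n:ℝ)) - l) ≤ 1 := by
    have h1 := Real.log_le_sub_one_of_pos (x := (1 + (n:ℝ)) / n) (by positivity)
    rw [Real.log_div (by positivity) hn0.ne'] at h1
    have h2 : (n:ℝ) * ((1 + (n:ℝ)) / n - 1) = 1 := by field_simp; ring
    calc (n:ℝ) * (Real.log (1 + (n:ℝ)) - l) ≤ (n:ℝ) * ((1 + (n:ℝ)) / n - 1) :=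
          mul_le_mul_of_nonneg_left h1 hn0.le
      _ = 1 := h2
  have hM0 : (0:ℝ) ≤ M := by positivity
  set w := Real.log (1 + (n:ℝ)) with hw
  have hw0 : 0 ≤ w := Real.log_nonneg (by linarith)
  set p := Real.log ((M:ℝ) + 1) with hp
  have main : (m:ℝ) * SS x ≥ n * m - (n+m)/2 + n * m * l - (n + m) * m * w - (n+m) * (1 + q) := by
    have a1 : (M:ℝ) * (1 + p) ≤ (n+m) * (1+q) := by
      apply mul_le_mul <;> linarith [Real.log_nonneg (x := (M:ℝ)+1) (by linarith)]
    have a2 : (M:ℝ) * (m * w) ≤ (n+m) * (m * w) :=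
      mul_le_mul_of_nonneg_right (by linarith) (by positivity)
    have a3 : (2 * n * m + m * (m-1)) * Real.log √(n:ℝ) ≥ n * m * l := by
      have e1 : 0 ≤ Real.log √(n:ℝ) := by linarith
      have e2 : 0 ≤ (m:ℝ) * (m-1) * Real.log √(n:ℝ) :=
        mul_nonneg (mul_nonneg (by linarith) (by linarith)) e1
      have e3 : (2 * n * m) * Real.log √(n:ℝ) = n * m * l := by rw [← hlR]; ring
      linarith
    have a4 : (M:ℝ) * (M+1) / 2 ≥ n^2/2 + n * m - (n+m)/2 := by
      rw [hMr]; nlinarith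
    have a5 : (M:ℝ) * SS x = (n + m - 1) * SS x := by rw [hMr]
    linarith
  have hmm : (m:ℝ) ≤ m * m := by
    simpa using mul_le_mul_of_nonneg_left hm1r (by linarith : (0:ℝ) ≤ m)
  have b1 : (n:ℝ) + m ≤ 5 * √n * m := by
    have t1 : (m:ℝ) * m ≤ √n * m := mul_le_mul_of_nonneg_right hms (by linarith)
    linarith
  have b2 : m * m * w ≤ m * (√n * q) := by
    have t1 : m * w ≤ √n * q := mul_le_mul hms l1 hw0 hR.le
    have t2 := mul_le_mul_of_nonneg_left t1 (by linarith : (0:ℝ) ≤ m)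
    linarith
  have b3 : ((n:ℝ)+m) * (1+q) ≤ 5 * √n * m * (1+q) :=
    mul_le_mul_of_nonneg_right b1 (by linarith)
  have b4 : (m:ℝ) * (n * (w - l)) ≤ m * 1 := mul_le_mul_of_nonneg_left l3 (by linarith)
  have fin : (m:ℝ) * (n - 1 - 8 * √n - 6 * (√n * q)) ≤ m * SS x := by
    have : (0:ℝ) ≤ m * √n := by positivity
    linarith
  exact le_of_mul_le_mul_left fin (by linarith)

lemma isMinC_of {n : ℕ} (x : Fin n → EuclideanSpace ℝ (Fin 2))
    (hmin : ∀ z : Fin n → EuclideanSpace ℝ (Fin 2), wHamE n x ≤ wHamE n z) :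
    IsMinC (fun i => Complex.orthonormalBasisOneI.repr.symm (x i)) := by
  set e := Complex.orthonormalBasisOneI.repr with he
  have hval : ∀ z : Fin n → ℂ, Function.Injective z →
      wHamE n (fun i => e (z i)) = ((-DD z + n * SS z : ℝ) : EReal) := by
    intro z hz
    have hinj : Function.Injective (fun i => e (z i)) := e.injective.comp hz
    rw [wHamE, if_pos hinj]
    simp only [DD, SS, ← map_sub, LinearIsometryEquiv.norm_map, dist_eq_norm]
  have hxi : Function.Injective x := by
    by_contra hne
    have h1 := hmin (fun i => e ((i : ℕ) : ℂ))
    rw [hval (fun i => ((i:ℕ):ℂ)) (fun i j hij => by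
      have : ((i:ℕ):ℂ) = ((j:ℕ):ℂ) := hij
      exact Fin.ext (by exact_mod_cast this)), wHamE, if_neg hne] at h1
    exact EReal.coe_ne_top _ (top_le_iff.1 h1)
  have hi : Function.Injective (fun i => e.symm (x i)) := e.symm.injective.comp hxi
  refine ⟨hi, ?_⟩
  intro z hz
  have h1 := hmin (fun i => e (z i))
  have h2 := hval _ hi
  simp only [LinearIsometryEquiv.apply_symm_apply] at h2
  rw [hval z hz] at h1
  have h3 : wHamE n x = _ := h2
  rw [h3] at h1
  exact_mod_cast h1

/-- If for every `n ≥ 2` the tuple `(x₁ⁿ,…,xₙⁿ)` minimizes `w_n`, then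
`(1/n) ∑ᵢ log(1+|xᵢⁿ|²) → ∫ log(1+|x|²) dμ_V = 1`. -/
theorem limit_log_moment_of_minimizers
    (x : (n : ℕ) → Fin n → EuclideanSpace ℝ (Fin 2))
    (hmin : ∀ n, 2 ≤ n → ∀ z : Fin n → EuclideanSpace ℝ (Fin 2),
      wHamE n (x n) ≤ wHamE n z) :
    Tendsto (fun n : ℕ => (1 / (n : ℝ)) * ∑ i : Fin n, Real.log (1 + ‖x n i‖^2)) atTop
      (nhds (∫ a, Real.log (1 + ‖a‖^2) ∂muV)) ∧
    ∫ a, Real.log (1 + ‖a‖^2) ∂muV = 1 := by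
  refine ⟨?_, muV_integral⟩
  rw [muV_integral]
  have hS : ∀ n, ∑ i : Fin n, Real.log (1 + ‖x n i‖^2)
      = SS (fun i => Complex.orthonormalBasisOneI.repr.symm (x n i)) := by
    intro n
    simp only [SS, LinearIsometryEquiv.norm_map]
  have hlim : Tendsto (fun n : ℕ => 1 - (1 / (n:ℝ)) - 8 * (1 / √(n:ℝ))
      - 6 * (Real.log 2 * (1 / √(n:ℝ)) + Real.log n / √(n:ℝ))) atTop (nhds 1) := by
    have hs : Tendsto (fun n : ℕ => √(n:ℝ)) atTop atTop :=
      Real.tendsto_sqrt_atTop.comp tendsto_natCast_atTop_atTop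
    have h1 : Tendsto (fun n : ℕ => 1 / √(n:ℝ)) atTop (nhds 0) := by
      simpa [Function.comp_def] using tendsto_inv_atTop_zero.comp hs
    have h2 : Tendsto (fun n : ℕ => 1 / (n:ℝ)) atTop (nhds 0) := tendsto_one_div_atTop_nhds_zero_nat
    have h3 : Tendsto (fun n : ℕ => Real.log n / √(n:ℝ)) atTop (nhds 0) := by
      have := (isLittleO_log_rpow_atTop (r := 1/2) (by norm_num)).tendsto_div_nhds_zero
      refine (this.comp tendsto_natCast_atTop_atTop).congr ?_
      intro n
      simp [Real.sqrt_eq_rpow]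
    have := ((tendsto_const_nhds (x := (1:ℝ))).sub h2 |>.sub (h1.const_mul 8)).sub
      (((h1.const_mul (Real.log 2)).add h3).const_mul 6)
    simpa using this
  refine tendsto_of_tendsto_of_tendsto_of_le_of_le' hlim tendsto_const_nhds ?_ ?_
  · filter_upwards [eventually_ge_atTop 2] with n hn
    have hb := SS_ge (by omega) _ (isMinC_of (x n) (hmin n hn))
    rw [hS]
    have hn0 : (0:ℝ) < n := by exact_mod_cast (by omega : 0 < n)
    have hs0 : 0 < √(n:ℝ) := Real.sqrt_pos.2 hn0
    have hss : √(n:ℝ) * √(n:ℝ) = n := Real.mul_self_sqrt hn0.le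
    have e : 1 - (1 / (n:ℝ)) - 8 * (1 / √(n:ℝ))
      - 6 * (Real.log 2 * (1 / √(n:ℝ)) + Real.log n / √(n:ℝ))
      = (1 / (n:ℝ)) * (n - 1 - 8 * √n - 6 * (√n * (Real.log 2 + Real.log n))) := by
      have e1 : 1 / √(n:ℝ) = (1 / (n:ℝ)) * √n := by
        field_simp
        linarith
      have e2 : 1 = (1 / (n:ℝ)) * n := by field_simp
      rw [div_eq_mul_one_div (Real.log n), e1]
      nth_rewrite 1 [e2]
      ring
    rw [e]
    exact mul_le_mul_of_nonneg_left hb (by positivity)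
  · filter_upwards [eventually_ge_atTop 2] with n hn
    have hb := SS_le _ (isMinC_of (x n) (hmin n hn))
    rw [hS]
    have hn0 : (0:ℝ) < n := by exact_mod_cast (by omega : 0 < n)
    rw [one_div, inv_mul_le_iff₀ hn0, mul_one]
    exact hb
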